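/- With a covering and choices of transition matrices A_{ij} normalized so that det A_{ij} = (−1)^{t_i} h_{ij}/s_{j t_i}, let M_i be the r×(r−2) matrix whose block form is (Δ_{t_i}T'_i over T''_i), where T'_i is the (r−1)×(r−1) matrix equal to the identity except that its t_i-th column has entries −(−1)^{t_i} s_{i1}, …, −(−1)^{t_i} s_{i,r−1} (with 1 in position t_i), T''_i is the 2×(r−1) matrix which is zero except that its t_i-th column is (f_i, g_i)^T, and Δ_t deletes the t-th row. Then an r×r matrix Z_{ij} with block form ((P_{ij}, Q_{ij}),(R_{ij}, S_{ij})) satisfies M_i = Z_{ij} M_j if and only if: (1) P_{ij} = Δ_{t_i}T'_i Δ'_{t_j}; (2) R_{ij} = T''_i Δ'_{t_j}; (3) Q_{ij}(f_j, g_j)^T = (−1)^{t_j} Δ_{t_i}T'_i (s_{j1}, …, s_{j,r−1})^T; and (4) S_{ij}(f_j, g_j)^T = (−1)^{t_j} s_{j t_i} (f_i, g_i)^T. Moreover, such a matrix Z_{ij} always exists, and with the above normalization one has det S_{ij} = (−1)^{t_i} s_{j t_i} h_{ij} and det Z_{ij} = h_{ij}. -/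

import Mathlib

/-! **Lemma 4.1 of Arrondo's "Home-made Hartshorne–Serre correspondence".**

Throughout, write the rank as `r = n + 2`, so that the `r − 1` sections are indexed by
`Fin (n + 1)` and the matrices `Mᵢ` have `r = n + 2` rows (indexed by `Fin n ⊕ Fin 2`)
and `r − 1 = n + 1` columns. All computations happen in the (commutative) ring `A` of
regular functions on `U i ∩ U j`, where `Y` is a codimension-two local complete
intersection subscheme of the smooth variety `X`, its ideal on `U i` is generated by the
regular functions `fi, gi` (resp. `fj, gj` on `U j`), `L` is a line bundle with transition
function `h` (a unit), and `si, sj` are the local representatives of the `r − 1` global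
sections generating `(∧²N) ⊗ L*|_Y`, normalized so that `si ti = (−1)^{ti}` and
`sj tj = (−1)^{tj}`, with the transition matrix `Amat` for `(fi, gi)` chosen with
`det Amat = (−1)^{ti} · h / (sj ti)`. -/

open Matrix

/-- The `(r−1)×(r−1)` matrix `T'ᵢ`: the identity matrix except that its `t`-th column has
entries `−(−1)^t s 0, …, −(−1)^t s (r−2)`, with `1` in position `t`. -/
def Tmat {A : Type*} [CommRing A] {n : ℕ} (t : Fin (n + 1)) (s : Fin (n + 1) → A) :
    Matrix (Fin (n + 1)) (Fin (n + 1)) A :=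
  Matrix.of fun a b =>
    if b = t then (if a = t then 1 else -(-1 : A) ^ (t : ℕ) * s a)
    else if a = b then 1 else 0

/-- The `2×(r−1)` matrix `T''ᵢ`: zero except that its `t`-th column is `(f, g)ᵀ`. -/
def Tmat'' {A : Type*} [CommRing A] {n : ℕ} (t : Fin (n + 1)) (f g : A) :
    Matrix (Fin 2) (Fin (n + 1)) A :=
  Matrix.of fun a b => if b = t then ![f, g] a else 0

/-- `Δ_t`: delete the `t`-th row of a matrix with `r − 1 = n + 1` rows. -/
def deleteRow {A : Type*} {n : ℕ} {m : Type*} (t : Fin (n + 1))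
    (M : Matrix (Fin (n + 1)) m A) : Matrix (Fin n) m A :=
  M.submatrix t.succAbove id

/-- `Δ'_t`: delete the `t`-th column of a matrix with `r − 1 = n + 1` columns. -/
def deleteCol {A : Type*} {n : ℕ} {m : Type*} (t : Fin (n + 1))
    (M : Matrix m (Fin (n + 1)) A) : Matrix m (Fin n) A :=
  M.submatrix id t.succAbove

/-- The `r×(r−1)` matrix `Mᵢ` with block form `(Δ_{tᵢ}T'ᵢ over T''ᵢ)`, whose columns
represent the sections `α₁, …, α_{r−1}` on `U i`. -/
def Mmat {A : Type*} [CommRing A] {n : ℕ} (t : Fin (n + 1)) (s : Fin (n + 1) → A)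
    (f g : A) : Matrix (Fin n ⊕ Fin 2) (Fin (n + 1)) A :=
  Matrix.fromRows (deleteRow t (Tmat t s)) (Tmat'' t f g)

/-!
Since the matrix `Mⱼ` sends `sⱼ` to `(-1)^tⱼ (0, fⱼ, gⱼ)` and `sⱼ` has a unit in position `tⱼ`,
the equation `Mᵢ = Z Mⱼ` may be tested on the columns other than `tⱼ` (giving `P` and `R`) and on
the vector `sⱼ` (giving `Q` and `S`). For the determinant, `R` is a rank-one matrix of the form
`S X`, so that `det Z = det (P - Q X) det S`, and `P - Q X` is again a minor
`Δ_{tᵢ} T' Δ'_{tⱼ}`, now for the section vector `sⱼ` rescaled to be normalized at `tᵢ`. Such minors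
are the cofactors of a unimodular matrix sending `s` to a multiple of a basis vector, hence are the
entries of `s` up to sign.
-/

theorem neg_one_pow_mul_neg_one_pow_self {R : Type*} [Monoid R] [HasDistribNeg R] (k : ℕ) :
    (-1 : R) ^ k * (-1 : R) ^ k = 1 := by
  rw [← pow_add, Even.neg_one_pow ⟨k, rfl⟩]

theorem exists_mulVec_pair_eq {A : Type*} [Semiring A] {m : Type*} {f g : A} {v : m → A}
    (hv : ∀ a, v a ∈ Ideal.span ({f, g} : Set A)) :
    ∃ Q : Matrix m (Fin 2) A, Q *ᵥ ![f, g] = v := by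
  choose x y hxy using fun a => Ideal.mem_span_pair.1 (hv a)
  refine ⟨Matrix.of fun a => ![x a, y a], funext fun a => ?_⟩
  simp [Matrix.mulVec, dotProduct, hxy]

theorem det_fromBlocks_mul_lower_left {A : Type*} [CommRing A] {m k : Type*} [Fintype m]
    [DecidableEq m] [Fintype k] [DecidableEq k] (P : Matrix m m A) (Q : Matrix m k A)
    (S : Matrix k k A) (X : Matrix k m A) :
    (fromBlocks P Q (S * X) S).det = (P - Q * X).det * S.det := by
  have hfactor : fromBlocks P Q (S * X) S = fromBlocks (P - Q * X) Q 0 S * fromBlocks 1 0 X 1 := by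
    simp [fromBlocks_multiply]
  rw [hfactor, det_mul, det_fromBlocks_zero₂₁, det_fromBlocks_zero₁₂]
  simp

section Deletion

variable {A : Type*} {n : ℕ} {m : Type*}

theorem deleteCol_vecMulVec [Mul A] (t : Fin (n + 1)) (v : m → A) (w : Fin (n + 1) → A) :
    deleteCol t (vecMulVec v w) = vecMulVec v (w ∘ t.succAbove) :=
  rfl

theorem mulVec_eq_add_deleteCol_mulVec [NonUnitalNonAssocSemiring A] (t : Fin (n + 1))
    (G : Matrix m (Fin (n + 1)) A) (s : Fin (n + 1) → A) (a : m) :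
    (G *ᵥ s) a = G a t * s t + (deleteCol t G *ᵥ (s ∘ t.succAbove)) a :=
  Fin.sum_univ_succAbove _ t

theorem eq_iff_deleteCol_eq_and_mulVec_eq [Ring A] {t : Fin (n + 1)} {s : Fin (n + 1) → A}
    (hs : IsUnit (s t)) {G H : Matrix m (Fin (n + 1)) A} :
    G = H ↔ deleteCol t G = deleteCol t H ∧ G *ᵥ s = H *ᵥ s := by
  refine ⟨fun hGH => hGH ▸ ⟨rfl, rfl⟩, fun ⟨hcol, hvec⟩ => ?_⟩
  ext a b
  rcases Fin.eq_self_or_eq_succAbove t b with rfl | ⟨b, rfl⟩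
  · have hrow := congrFun hvec a
    rw [mulVec_eq_add_deleteCol_mulVec b, mulVec_eq_add_deleteCol_mulVec b, hcol] at hrow
    exact hs.mul_right_cancel (add_right_cancel hrow)
  · exact congrFun (congrFun hcol a) b

end Deletion

section LocalMatrices

variable {A : Type*} [CommRing A] {n : ℕ} (t : Fin (n + 1)) (s : Fin (n + 1) → A) (f g : A)

theorem Tmat''_eq_vecMulVec : Tmat'' t f g = vecMulVec ![f, g] (Pi.single t 1) := by
  ext a b
  simp [Tmat'', vecMulVec_apply, Pi.single_apply]

theorem Tmat_apply_self : Tmat t s t = Pi.single t 1 := by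
  funext b
  by_cases hb : b = t <;> simp [Tmat, hb, eq_comm (a := t)]

theorem deleteRow_Tmat_eq_sub :
    deleteRow t (Tmat t s) =
      deleteRow t 1 - vecMulVec ((-1 : A) ^ (t : ℕ) • s ∘ t.succAbove) (Pi.single t 1) := by
  ext a b
  by_cases hb : b = t
  · simp [deleteRow, Tmat, vecMulVec_apply, hb, Fin.succAbove_ne]
  · simp [deleteRow, Tmat, vecMulVec_apply, hb, one_apply]

theorem Tmat''_mulVec (v : Fin (n + 1) → A) : Tmat'' t f g *ᵥ v = v t • ![f, g] := by
  rw [Tmat''_eq_vecMulVec, vecMulVec_mulVec, single_one_dotProduct, op_smul_eq_smul]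

theorem deleteRow_Tmat_mulVec (v : Fin (n + 1) → A) :
    deleteRow t (Tmat t s) *ᵥ v =
      v ∘ t.succAbove - (v t * (-1 : A) ^ (t : ℕ)) • s ∘ t.succAbove := by
  have hone : deleteRow t (1 : Matrix _ _ A) *ᵥ v = v ∘ t.succAbove :=
    congrArg (· ∘ t.succAbove) (one_mulVec v)
  rw [deleteRow_Tmat_eq_sub, sub_mulVec, hone, vecMulVec_mulVec, single_one_dotProduct,
    op_smul_eq_smul, smul_smul]

theorem deleteCol_deleteRow_Tmat : deleteCol t (deleteRow t (Tmat t s)) = 1 := by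
  ext a b
  simp [deleteCol, deleteRow, Tmat, one_apply, Fin.succAbove_ne]

theorem deleteCol_Tmat'' : deleteCol t (Tmat'' t f g) = 0 := by
  ext a b
  simp [deleteCol, Tmat'', Fin.succAbove_ne]

theorem det_Tmat : (Tmat t s).det = 1 := by
  have hcol : Tmat t s = (1 : Matrix _ _ A).updateCol t
      fun a => if a = t then 1 else -(-1 : A) ^ (t : ℕ) * s a := by
    ext a b
    simp [Tmat, updateCol_apply, one_apply]
  rw [hcol, ← cramer_apply, cramer_one]
  simp

variable {t s}

theorem deleteRow_Tmat_mulVec_self (hs : s t = (-1 : A) ^ (t : ℕ)) :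
    deleteRow t (Tmat t s) *ᵥ s = 0 := by
  rw [deleteRow_Tmat_mulVec, hs, neg_one_pow_mul_neg_one_pow_self, one_smul, sub_self]

theorem Tmat_mulVec_self (hs : s t = (-1 : A) ^ (t : ℕ)) :
    Tmat t s *ᵥ s = Pi.single t (s t) := by
  funext a
  rcases Fin.eq_self_or_eq_succAbove t a with rfl | ⟨a, rfl⟩
  · rw [mulVec, Tmat_apply_self, single_one_dotProduct, Pi.single_eq_same]
  · rw [Pi.single_eq_of_ne (Fin.succAbove_ne t a)]
    exact congrFun (deleteRow_Tmat_mulVec_self hs) a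

theorem det_deleteCol_deleteRow_Tmat (hs : s t = (-1 : A) ^ (t : ℕ)) (u : Fin (n + 1)) :
    (deleteCol u (deleteRow t (Tmat t s))).det = (-1 : A) ^ (u : ℕ) * s u := by
  have hcofactor : (Tmat t s).adjugate u t =
      (-1 : A) ^ ((t : ℕ) + u) * (deleteCol u (deleteRow t (Tmat t s))).det :=
    adjugate_fin_succ_eq_det_submatrix _ _ _
  have hcolumn : (Tmat t s).adjugate u t * s t = s u := by
    have hadj : (Tmat t s).adjugate *ᵥ (Tmat t s *ᵥ s) = s := by
      rw [mulVec_mulVec, adjugate_mul, det_Tmat, one_smul, one_mulVec]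
    simpa [Tmat_mulVec_self hs] using congrFun hadj u
  rw [← hcolumn, hcofactor, hs, pow_add]
  linear_combination (-(deleteCol u (deleteRow t (Tmat t s))).det) *
    ((-1 : A) ^ (t : ℕ) * (-1 : A) ^ (t : ℕ) * neg_one_pow_mul_neg_one_pow_self (R := A) u
      + neg_one_pow_mul_neg_one_pow_self (R := A) t)

theorem eq_mul_deleteRow_Tmat_add_mul_Tmat''_iff {m : Type*} (hs : s t = (-1 : A) ^ (t : ℕ))
    (G : Matrix m (Fin (n + 1)) A) (P : Matrix m (Fin n) A) (Q : Matrix m (Fin 2) A) :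
    G = P * deleteRow t (Tmat t s) + Q * Tmat'' t f g ↔
      P = deleteCol t G ∧ Q *ᵥ ![f, g] = (-1 : A) ^ (t : ℕ) • G *ᵥ s := by
  have hunit : IsUnit (s t) := hs ▸ isUnit_neg_one.pow _
  have hcol : deleteCol t (P * deleteRow t (Tmat t s) + Q * Tmat'' t f g) = P := by
    change P * deleteCol t (deleteRow t (Tmat t s)) + Q * deleteCol t (Tmat'' t f g) = P
    rw [deleteCol_deleteRow_Tmat, deleteCol_Tmat'', Matrix.mul_one, Matrix.mul_zero, add_zero]
  have hvec : (P * deleteRow t (Tmat t s) + Q * Tmat'' t f g) *ᵥ s =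
      (-1 : A) ^ (t : ℕ) • Q *ᵥ ![f, g] := by
    rw [add_mulVec, ← mulVec_mulVec, ← mulVec_mulVec, deleteRow_Tmat_mulVec_self hs,
      Tmat''_mulVec, mulVec_zero, zero_add, mulVec_smul, hs]
  have hsign (v w : m → A) : v = (-1 : A) ^ (t : ℕ) • w ↔ w = (-1 : A) ^ (t : ℕ) • v := by
    constructor <;> rintro rfl <;>
      rw [smul_smul, neg_one_pow_mul_neg_one_pow_self, one_smul]
  rw [eq_iff_deleteCol_eq_and_mulVec_eq hunit, hcol, hvec, hsign, eq_comm (b := P)]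

end LocalMatrices

section Transition

variable {A : Type*} [CommRing A] {n : ℕ} {fi gi fj gj : A} {si sj : Fin (n + 1) → A}
  {ti tj : Fin (n + 1)}

theorem Mmat_eq_fromBlocks_mul_Mmat_iff (hnormj : sj tj = (-1 : A) ^ (tj : ℕ))
    (P : Matrix (Fin n) (Fin n) A) (Q : Matrix (Fin n) (Fin 2) A)
    (R : Matrix (Fin 2) (Fin n) A) (S : Matrix (Fin 2) (Fin 2) A) :
    Mmat ti si fi gi = fromBlocks P Q R S * Mmat tj sj fj gj ↔
      (P = deleteCol tj (deleteRow ti (Tmat ti si)) ∧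
       R = deleteCol tj (Tmat'' ti fi gi) ∧
       Q *ᵥ ![fj, gj] = (-1 : A) ^ (tj : ℕ) • deleteRow ti (Tmat ti si) *ᵥ sj ∧
       S *ᵥ ![fj, gj] = ((-1 : A) ^ (tj : ℕ) * sj ti) • ![fi, gi]) := by
  rw [Mmat, Mmat, fromBlocks_mul_fromRows, fromRows_ext_iff,
    eq_mul_deleteRow_Tmat_add_mul_Tmat''_iff fj gj hnormj,
    eq_mul_deleteRow_Tmat_add_mul_Tmat''_iff fj gj hnormj, Tmat''_mulVec, smul_smul]
  tauto

theorem det_mul_eq_of_Mmat_eq_fromBlocks_mul_Mmat (hnormj : sj tj = (-1 : A) ^ (tj : ℕ))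
    (hunit : IsUnit (sj ti)) {P : Matrix (Fin n) (Fin n) A} {Q : Matrix (Fin n) (Fin 2) A}
    {R : Matrix (Fin 2) (Fin n) A} {S : Matrix (Fin 2) (Fin 2) A}
    (hZ : Mmat ti si fi gi = fromBlocks P Q R S * Mmat tj sj fj gj) :
    sj ti * (fromBlocks P Q R S).det = (-1 : A) ^ (ti : ℕ) * S.det := by
  obtain ⟨hP, hR, hQ, hS⟩ := (Mmat_eq_fromBlocks_mul_Mmat_iff hnormj P Q R S).1 hZ
  obtain ⟨c, hc⟩ := hunit.exists_right_inv
  have hsq (k : ℕ) := neg_one_pow_mul_neg_one_pow_self (R := A) k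
  let e : Fin n → A := Pi.single ti 1 ∘ tj.succAbove
  let X : Matrix (Fin 2) (Fin n) A := vecMulVec (((-1 : A) ^ (tj : ℕ) * c) • ![fj, gj]) e
  let s : Fin (n + 1) → A := ((-1 : A) ^ (ti : ℕ) * c) • sj
  have hs : s ti = (-1 : A) ^ (ti : ℕ) := by
    simp only [s, Pi.smul_apply, smul_eq_mul]
    linear_combination (-1 : A) ^ (ti : ℕ) * hc
  have hSX : S * X = R := by
    rw [hR, Tmat''_eq_vecMulVec, deleteCol_vecMulVec, mul_vecMulVec, mulVec_smul, hS, smul_smul]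
    congr 1
    convert one_smul A _ using 2
    linear_combination sj ti * c * hsq tj + hc
  have hPX : P - Q * X = deleteCol tj (deleteRow ti (Tmat ti s)) := by
    rw [hP, mul_vecMulVec, mulVec_smul, hQ, deleteRow_Tmat_mulVec, deleteRow_Tmat_eq_sub,
      deleteRow_Tmat_eq_sub]
    ext a b
    simp only [deleteCol, e, s, Matrix.sub_apply, submatrix_apply, vecMulVec_apply, Pi.smul_apply,
      Pi.sub_apply, Function.comp_apply, smul_eq_mul, id]
    linear_combination Pi.single (M := fun _ => A) ti 1 (tj.succAbove b) *
      (c * sj (ti.succAbove a) * (hsq ti - hsq tj)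
        + (-1 : A) ^ (ti : ℕ) * si (ti.succAbove a) * (sj ti * c * hsq tj + hc))
  rw [← hSX, det_fromBlocks_mul_lower_left, hPX, det_deleteCol_deleteRow_Tmat hs]
  simp only [s, Pi.smul_apply, smul_eq_mul, hnormj]
  linear_combination S.det * (-1 : A) ^ (ti : ℕ) * (sj ti * c * hsq tj + hc)

theorem deleteRow_Tmat_mulVec_mem {I : Ideal A} {d h : A} (hh : IsUnit h)
    (hd : d * sj ti = (-1 : A) ^ (ti : ℕ) * h) {a : Fin n}
    (hs : h * si (ti.succAbove a) - d * sj (ti.succAbove a) ∈ I) :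
    (deleteRow ti (Tmat ti si) *ᵥ sj) a ∈ I := by
  rw [← I.unit_mul_mem_iff_mem hh, deleteRow_Tmat_mulVec]
  convert I.mul_mem_left (-((-1 : A) ^ (ti : ℕ) * sj ti)) hs using 1
  simp only [Pi.sub_apply, Pi.smul_apply, Function.comp_apply, smul_eq_mul]
  linear_combination -sj (ti.succAbove a) * ((-1 : A) ^ (ti : ℕ) * hd
    + h * neg_one_pow_mul_neg_one_pow_self (R := A) ti)

end Transition

theorem stmt17_general {A : Type*} [CommRing A] {n : ℕ}
    (fi gi fj gj : A) (si sj : Fin (n + 1) → A) (ti tj : Fin (n + 1)) (h : A)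
    (hUnit : IsUnit h)
    (hnormj : sj tj = (-1 : A) ^ (tj : ℕ))
    (Amat : Matrix (Fin 2) (Fin 2) A)
    (hA : ![fi, gi] = Amat.mulVec ![fj, gj])
    (hAdet : Amat.det * sj ti = (-1 : A) ^ (ti : ℕ) * h)
    (hs : ∀ u : Fin (n + 1), h * si u - Amat.det * sj u ∈ Ideal.span ({fj, gj} : Set A)) :
    (∀ (P : Matrix (Fin n) (Fin n) A) (Q : Matrix (Fin n) (Fin 2) A)
        (R : Matrix (Fin 2) (Fin n) A) (S : Matrix (Fin 2) (Fin 2) A),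
      Mmat ti si fi gi = Matrix.fromBlocks P Q R S * Mmat tj sj fj gj ↔
        (P = deleteCol tj (deleteRow ti (Tmat ti si)) ∧
         R = deleteCol tj (Tmat'' ti fi gi) ∧
         Q.mulVec ![fj, gj] =
           ((-1 : A) ^ (tj : ℕ)) • (deleteRow ti (Tmat ti si)).mulVec sj ∧
         S.mulVec ![fj, gj] = ((-1 : A) ^ (tj : ℕ) * sj ti) • ![fi, gi])) ∧
    (∃ (P : Matrix (Fin n) (Fin n) A) (Q : Matrix (Fin n) (Fin 2) A)
        (R : Matrix (Fin 2) (Fin n) A) (S : Matrix (Fin 2) (Fin 2) A),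
      Mmat ti si fi gi = Matrix.fromBlocks P Q R S * Mmat tj sj fj gj ∧
      S.det = (-1 : A) ^ (ti : ℕ) * sj ti * h ∧
      (Matrix.fromBlocks P Q R S).det = h) := by
  refine ⟨Mmat_eq_fromBlocks_mul_Mmat_iff hnormj, ?_⟩
  have hsunit : IsUnit (sj ti) :=
    isUnit_of_mul_isUnit_right (hAdet ▸ (isUnit_neg_one.pow _).mul hUnit)
  obtain ⟨Q, hQ⟩ := exists_mulVec_pair_eq fun a =>
    (Ideal.span {fj, gj}).mul_mem_left ((-1 : A) ^ (tj : ℕ))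
      (deleteRow_Tmat_mulVec_mem hUnit hAdet (hs _))
  let S := ((-1 : A) ^ (tj : ℕ) * sj ti) • Amat
  have hS : S *ᵥ ![fj, gj] = ((-1 : A) ^ (tj : ℕ) * sj ti) • ![fi, gi] := by
    rw [smul_mulVec, hA]
  have hSdet : S.det = (-1 : A) ^ (ti : ℕ) * sj ti * h := by
    rw [det_smul, Fintype.card_fin]
    linear_combination sj ti * hAdet
      + Amat.det * sj ti ^ 2 * neg_one_pow_mul_neg_one_pow_self (R := A) tj
  have hZ := (Mmat_eq_fromBlocks_mul_Mmat_iff hnormj _ Q _ S).2 ⟨rfl, rfl, hQ, hS⟩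
  refine ⟨_, Q, _, S, hZ, hSdet, hsunit.mul_left_cancel ?_⟩
  rw [det_mul_eq_of_Mmat_eq_fromBlocks_mul_Mmat hnormj hsunit hZ, hSdet]
  linear_combination sj ti * h * neg_one_pow_mul_neg_one_pow_self (R := A) ti

/-- An `r×r` matrix `Z = ((P, Q), (R, S))` satisfies `Mᵢ = Z Mⱼ` if and only if
(1) `P = Δ_{tᵢ}T'ᵢ Δ'_{tⱼ}`; (2) `R = T''ᵢ Δ'_{tⱼ}`;
(3) `Q (fⱼ, gⱼ)ᵀ = (−1)^{tⱼ} Δ_{tᵢ}T'ᵢ (sⱼ₁, …, sⱼ,r−1)ᵀ`;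
(4) `S (fⱼ, gⱼ)ᵀ = (−1)^{tⱼ} sⱼ,tᵢ (fᵢ, gᵢ)ᵀ`.
Moreover such a matrix always exists and, with the normalized choice of `Amat`,
it satisfies `det S = (−1)^{tᵢ} sⱼ,tᵢ h` and `det Z = h`. -/
theorem stmt17 {A : Type*} [CommRing A] {n : ℕ}
    (fi gi fj gj : A) (si sj : Fin (n + 1) → A) (ti tj : Fin (n + 1)) (h : A)
    (hUnit : IsUnit h)
    (hnormi : si ti = (-1 : A) ^ (ti : ℕ)) (hnormj : sj tj = (-1 : A) ^ (tj : ℕ))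
    -- (fj, gj) is a regular sequence cutting out Y (Koszul relations only):
    (hreg : ∀ a b : A, a * fj + b * gj = 0 → ∃ c : A, a = c * gj ∧ b = -(c * fj))
    (Amat : Matrix (Fin 2) (Fin 2) A)
    (hA : ![fi, gi] = Amat.mulVec ![fj, gj])
    (hAdet : Amat.det * sj ti = (-1 : A) ^ (ti : ℕ) * h)
    -- the sections transform by s̄ᵢ = (det Ā/h̄) s̄ⱼ on Y ∩ Uᵢ ∩ Uⱼ:
    (hs : ∀ u : Fin (n + 1), h * si u - Amat.det * sj u ∈ Ideal.span ({fj, gj} : Set A)) :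
    (∀ (P : Matrix (Fin n) (Fin n) A) (Q : Matrix (Fin n) (Fin 2) A)
        (R : Matrix (Fin 2) (Fin n) A) (S : Matrix (Fin 2) (Fin 2) A),
      Mmat ti si fi gi = Matrix.fromBlocks P Q R S * Mmat tj sj fj gj ↔
        (P = deleteCol tj (deleteRow ti (Tmat ti si)) ∧
         R = deleteCol tj (Tmat'' ti fi gi) ∧
         Q.mulVec ![fj, gj] =
           ((-1 : A) ^ (tj : ℕ)) • (deleteRow ti (Tmat ti si)).mulVec sj ∧
         S.mulVec ![fj, gj] = ((-1 : A) ^ (tj : ℕ) * sj ti) • ![fi, gi])) ∧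
    (∃ (P : Matrix (Fin n) (Fin n) A) (Q : Matrix (Fin n) (Fin 2) A)
        (R : Matrix (Fin 2) (Fin n) A) (S : Matrix (Fin 2) (Fin 2) A),
      Mmat ti si fi gi = Matrix.fromBlocks P Q R S * Mmat tj sj fj gj ∧
      S.det = (-1 : A) ^ (ti : ℕ) * sj ti * h ∧
      (Matrix.fromBlocks P Q R S).det = h) :=
  stmt17_general fi gi fj gj si sj ti tj h hUnit hnormj Amat hA hAdet hs
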